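/- arXiv:1402.3428 — 2 statements merged into one kernel-verified Lean document; each statement's English description precedes it below -/
import Mathlib

section
/- Let ν, ν_h, t ∈ ℝ³ be unit vectors with ⟨ν_h, t⟩ = 0 and ‖ν − ν_h‖ ≤ 1, let H : ℝ³ → ℝ³ be a linear map and d ∈ ℝ. Then 1 − ‖ν − ν_h‖² − |d|·‖H‖ ≤ ‖t − ⟨ν, t⟩ν − d·Ht‖ ≤ 1 + |d|·‖H‖, where ‖H‖ is the operator norm. (This is the pointwise content of the edge-deformation estimate (A.5) of Lemma 4.1: with t = τ̄_h the unit tangent of a discrete edge (tangent to Γ_h^k, hence orthogonal to the discrete normal ν_h), ν the surface normal, and ∇π τ̄_h = (P − dH)τ̄_h, the bounds ‖ν − ν_h‖ ≲ h^k, |d| ≲ h^{k+1} give |1 − ‖∇π τ̄_h‖| ≲ h^{k+1}, i.e. ‖1 − δ_e‖_{L∞} ≲ h^{k+1}.) -/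
/-!
Let `Pt = t - ⟪ν, t⟫ • ν` be the component of `t` orthogonal to `ν`, so `‖Pt‖² = 1 - ⟪ν, t⟫²`.
As `t ⊥ νh`, Cauchy–Schwarz gives `|⟪ν, t⟫| = |⟪ν - νh, t⟫| ≤ ‖ν - νh‖`. Hence
`1 - ‖ν - νh‖² ≤ ‖Pt‖² ≤ ‖Pt‖ ≤ 1`, and the perturbation `d • H t`, of norm at most `|d| * ‖H‖`,
is absorbed by the triangle inequality.
-/

open RealInnerProductSpace

/-- Pointwise content of the edge-deformation estimate (A.5): for unit vectors `ν`, `ν_h`, `t`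
with `⟨ν_h, t⟩ = 0` and `‖ν − ν_h‖ ≤ 1`, a linear map `H` and `d ∈ ℝ`,
`1 − ‖ν − ν_h‖² − |d|‖H‖ ≤ ‖t − ⟨ν,t⟩ν − d·Ht‖ ≤ 1 + |d|‖H‖`. -/
theorem edge_deformation_bounds
    (ν νh t : EuclideanSpace ℝ (Fin 3))
    (hν : ‖ν‖ = 1) (hνh : ‖νh‖ = 1) (ht : ‖t‖ = 1)
    (horth : ⟪νh, t⟫ = 0) (hclose : ‖ν - νh‖ ≤ 1)
    (H : EuclideanSpace ℝ (Fin 3) →L[ℝ] EuclideanSpace ℝ (Fin 3)) (d : ℝ) :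
    1 - ‖ν - νh‖ ^ 2 - |d| * ‖H‖ ≤ ‖t - ⟪ν, t⟫ • ν - d • H t‖ ∧
      ‖t - ⟪ν, t⟫ • ν - d • H t‖ ≤ 1 + |d| * ‖H‖ := by
  have hs : |⟪ν, t⟫| ≤ ‖ν - νh‖ := by
    have h := abs_real_inner_le_norm (ν - νh) t
    rwa [inner_sub_left, horth, sub_zero, ht, mul_one] at h
  have hp : ‖t - ⟪ν, t⟫ • ν‖ ^ 2 = 1 - ⟪ν, t⟫ ^ 2 := by
    rw [norm_sub_sq_real, inner_smul_right, norm_smul, real_inner_comm, hν, ht, mul_one,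
      Real.norm_eq_abs, sq_abs]
    ring
  have hH : ‖d • H t‖ ≤ |d| * ‖H‖ := by
    rw [norm_smul, Real.norm_eq_abs]
    gcongr
    simpa [ht] using H.le_opNorm t
  have hs2 : ⟪ν, t⟫ ^ 2 ≤ ‖ν - νh‖ ^ 2 := sq_le_sq.mpr (by rwa [abs_norm])
  have hp0 := norm_nonneg (t - ⟪ν, t⟫ • ν)
  have hp1 : ‖t - ⟪ν, t⟫ • ν‖ ≤ 1 := by nlinarith [sq_nonneg ⟪ν, t⟫]
  -- Since `0 ≤ ‖Pt‖ ≤ 1`, the norm dominates its own square `1 - ⟪ν, t⟫ ^ 2`.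
  have hp2 : 1 - ‖ν - νh‖ ^ 2 ≤ ‖t - ⟪ν, t⟫ • ν‖ := by nlinarith
  constructor
  · linarith [norm_sub_norm_le (t - ⟪ν, t⟫ • ν) (d • H t)]
  · linarith [norm_sub_le (t - ⟪ν, t⟫ • ν) (d • H t)]
end

section
/- Let K ⊂ ℝ² be a fixed nondegenerate triangle (the closed convex hull of three affinely independent points), let k ≥ 0 and let l, m be integers with 0 ≤ l ≤ m. Then there exists a constant C > 0, depending only on K, k, l and m, such that for every h > 0 and every polynomial function v : ℝ² → ℝ of total degree at most k, ∫_{h•K} ‖D^m v(x)‖² dx ≤ C² h^{2(l−m)} ∫_{h•K} ‖D^l v(x)‖² dx, where h•K = {h x : x ∈ K} is the dilated triangle, D^j v denotes the j-th (Fréchet) derivative and the integrals are with respect to Lebesgue measure on ℝ². Equivalently, |v|_{H^m(h•K)} ≤ C h^{l−m} |v|_{H^l(h•K)}. (This is the inverse inequality of Lemma 4.3, stated for a dilated fixed triangle.) -/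
/-!
For fixed `K`, the polynomials of total degree at most `k` form a finite-dimensional space `P`, and
`derivLp hK k j : P → L²(K)`, `p ↦ D^j p`, is linear. If `D^l p = 0` almost everywhere on `K`, then by
continuity it vanishes on the interior of `K`; hence so does `D^m p` for `m ≥ l`, and since the
boundary of a convex set is null, `D^m p = 0` almost everywhere on `K`. So
`ker (derivLp hK k l) ≤ ker (derivLp hK k m)` and `derivLp hK k m` factors through the range of
`derivLp hK k l` by a linear map `S`. Its domain is finite-dimensional, so `S` is bounded, and its
norm provides the constant on `K` (`exists_reference_bound`). The inequality on `h • K` follows by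
applying the one on `K` to `x ↦ v (h • x)`, again a polynomial of degree at most `k`; the powers
of `h` come from the chain rule.
-/

open MeasureTheory Pointwise

/-- The function on the Euclidean plane defined by a bivariate polynomial. -/
noncomputable def polyFun (p : MvPolynomial (Fin 2) ℝ) : EuclideanSpace ℝ (Fin 2) → ℝ :=
  fun x => MvPolynomial.eval (fun i => x i) p

lemma contDiff_polyFun (p : MvPolynomial (Fin 2) ℝ) {n : WithTop ℕ∞} :
    ContDiff ℝ n (polyFun p) := by
  have h : AnalyticOnNhd ℝ (polyFun p) Set.univ := by
    intro x _
    have := AnalyticAt.aeval_mvPolynomial (𝕜 := ℝ) (z := x)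
      (f := fun (x : EuclideanSpace ℝ (Fin 2)) (i : Fin 2) => x i)
      (fun i => (EuclideanSpace.proj (𝕜 := ℝ) i).analyticAt x) p
    simp only [MvPolynomial.aeval_eq_eval] at this
    exact this
  exact h.contDiff

lemma polyFun_add (p q : MvPolynomial (Fin 2) ℝ) : polyFun (p + q) = polyFun p + polyFun q := by
  ext x; simp [polyFun]

lemma polyFun_smul (c : ℝ) (p : MvPolynomial (Fin 2) ℝ) : polyFun (c • p) = c • polyFun p := by
  ext x; simp [polyFun, MvPolynomial.smul_eval]

lemma continuous_deriv_polyFun (p : MvPolynomial (Fin 2) ℝ) (j : ℕ) :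
    Continuous (iteratedFDeriv ℝ j (polyFun p)) :=
  (contDiff_polyFun p (n := j)).continuous_iteratedFDeriv le_rfl

lemma memLp_deriv_polyFun {K : Set (EuclideanSpace ℝ (Fin 2))} (hK : IsCompact K)
    (p : MvPolynomial (Fin 2) ℝ) (j : ℕ) :
    MemLp (iteratedFDeriv ℝ j (polyFun p)) 2 (volume.restrict K) := by
  have hc := continuous_deriv_polyFun p j
  rw [memLp_two_iff_integrable_sq_norm hc.aestronglyMeasurable]
  exact (hc.norm.pow 2).continuousOn.integrableOn_compact hK

/-- The linear map `p ↦ D^j p` from polynomials of total degree at most `k` to `L²(K)`. -/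
noncomputable def derivLp {K : Set (EuclideanSpace ℝ (Fin 2))} (hK : IsCompact K) (k j : ℕ) :
    MvPolynomial.restrictTotalDegree (Fin 2) ℝ k →ₗ[ℝ]
      Lp (ContinuousMultilinearMap ℝ (fun _ : Fin j => EuclideanSpace ℝ (Fin 2)) ℝ) 2
        (volume.restrict K) where
  toFun p := (memLp_deriv_polyFun hK p.1 j).toLp _
  map_add' p q := by
    rw [← MemLp.toLp_add]
    congr 1
    rw [Submodule.coe_add, polyFun_add,
      iteratedFDeriv_add (contDiff_polyFun _) (contDiff_polyFun _)]
  map_smul' c p := by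
    rw [RingHom.id_apply, ← MemLp.toLp_const_smul]
    congr 1
    ext1 x
    rw [Submodule.coe_smul, polyFun_smul,
      iteratedFDeriv_const_smul_apply (contDiff_polyFun _).contDiffAt, Pi.smul_apply]

lemma norm_sq_derivLp {K : Set (EuclideanSpace ℝ (Fin 2))} (hK : IsCompact K) (k j : ℕ)
    (p : MvPolynomial.restrictTotalDegree (Fin 2) ℝ k) :
    ‖derivLp hK k j p‖ ^ 2 = ∫ x in K, ‖iteratedFDeriv ℝ j (polyFun p.1) x‖ ^ 2 := by
  have hp := memLp_deriv_polyFun hK p.1 j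
  have h0 : 0 ≤ ∫ x in K, ‖iteratedFDeriv ℝ j (polyFun p.1) x‖ ^ 2 :=
    integral_nonneg fun x => by positivity
  change ‖hp.toLp _‖ ^ 2 = _
  rw [Lp.norm_toLp, hp.eLpNorm_eq_integral_rpow_norm (by simp) (by simp)]
  simp only [ENNReal.toReal_ofNat, Real.rpow_ofNat]
  rw [ENNReal.toReal_ofReal (by positivity), ← Real.rpow_natCast, ← Real.rpow_mul h0]
  norm_num

lemma iteratedFDeriv_eq_zero_of_le {v : EuclideanSpace ℝ (Fin 2) → ℝ}
    {U : Set (EuclideanSpace ℝ (Fin 2))} (hU : IsOpen U) {l m : ℕ} (hlm : l ≤ m)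
    (h : ∀ x ∈ U, iteratedFDeriv ℝ l v x = 0) : ∀ x ∈ U, iteratedFDeriv ℝ m v x = 0 := by
  induction m, hlm using Nat.le_induction with
  | base => exact h
  | succ n _ ih =>
    intro x hx
    have he : iteratedFDeriv ℝ n v =ᶠ[nhds x] fun _ => 0 :=
      Filter.eventuallyEq_of_mem (hU.mem_nhds hx) ih
    rw [← norm_eq_zero, ← norm_fderiv_iteratedFDeriv, he.fderiv_eq,
      fderiv_fun_const]
    exact norm_zero (E := EuclideanSpace ℝ (Fin 2) →L[ℝ]
      ContinuousMultilinearMap ℝ (fun _ : Fin n => EuclideanSpace ℝ (Fin 2)) ℝ)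

lemma ker_derivLp_le {K : Set (EuclideanSpace ℝ (Fin 2))} (hK : IsCompact K) (hc : Convex ℝ K)
    (k : ℕ) {l m : ℕ} (hlm : l ≤ m) :
    LinearMap.ker (derivLp hK k l) ≤ LinearMap.ker (derivLp hK k m) := by
  intro p hp
  rw [LinearMap.mem_ker] at hp ⊢
  have hl : iteratedFDeriv ℝ l (polyFun p.1) =ᵐ[volume.restrict K] 0 :=
    (MemLp.toLp_eq_toLp_iff (memLp_deriv_polyFun hK p.1 l) MemLp.zero').1 hp
  have hint : Set.EqOn (iteratedFDeriv ℝ l (polyFun p.1)) 0 (interior K) :=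
    Measure.eqOn_open_of_ae_eq
      (ae_restrict_of_ae_restrict_of_subset interior_subset hl) isOpen_interior
      (continuous_deriv_polyFun p.1 l).continuousOn continuousOn_const
  have hm := iteratedFDeriv_eq_zero_of_le isOpen_interior hlm hint
  have hae : iteratedFDeriv ℝ m (polyFun p.1) =ᵐ[volume.restrict K] 0 := by
    rw [← Measure.restrict_congr_set
      (interior_ae_eq_of_null_frontier (hc.addHaar_frontier volume))]
    exact (ae_restrict_iff' isOpen_interior.measurableSet).2 (Filter.Eventually.of_forall hm)
  exact (MemLp.toLp_eq_toLp_iff (memLp_deriv_polyFun hK p.1 m) MemLp.zero').2 hae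

/-- The inverse inequality on the undilated set `K`. -/
lemma exists_reference_bound {K : Set (EuclideanSpace ℝ (Fin 2))} (hK : IsCompact K)
    (hc : Convex ℝ K) (k : ℕ) {l m : ℕ} (hlm : l ≤ m) :
    ∃ C > 0, ∀ p : MvPolynomial (Fin 2) ℝ, p.totalDegree ≤ k →
      ∫ x in K, ‖iteratedFDeriv ℝ m (polyFun p) x‖ ^ 2 ≤
        C ^ 2 * ∫ x in K, ‖iteratedFDeriv ℝ l (polyFun p) x‖ ^ 2 := by
  let S := ((LinearMap.ker (derivLp hK k l)).liftQ (derivLp hK k m)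
    (ker_derivLp_le hK hc k hlm)) ∘ₗ (derivLp hK k l).quotKerEquivRange.symm.toLinearMap
  let S' := LinearMap.toContinuousLinearMap S
  refine ⟨‖S'‖ + 1, by positivity, fun p hp => ?_⟩
  let q : MvPolynomial.restrictTotalDegree (Fin 2) ℝ k :=
    ⟨p, (MvPolynomial.mem_restrictTotalDegree _ _ _).2 hp⟩
  have hS : S' ⟨derivLp hK k l q, LinearMap.mem_range_self _ q⟩ = derivLp hK k m q := by
    change S _ = _
    simp only [S, LinearMap.comp_apply, LinearEquiv.coe_coe]
    rw [LinearMap.quotKerEquivRange_symm_apply_image]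
    simp
  have hn : ‖derivLp hK k m q‖ ≤ (‖S'‖ + 1) * ‖derivLp hK k l q‖ := by
    rw [← hS]
    refine (S'.le_opNorm _).trans ?_
    rw [Submodule.coe_norm]
    gcongr
    linarith
  have := pow_le_pow_left₀ (norm_nonneg _) hn 2
  rwa [mul_pow, norm_sq_derivLp, norm_sq_derivLp] at this

lemma exists_dilated_poly (p : MvPolynomial (Fin 2) ℝ) (h : ℝ) :
    ∃ q : MvPolynomial (Fin 2) ℝ, q.totalDegree ≤ p.totalDegree ∧
      polyFun q = fun x => polyFun p (h • x) := by
  refine ⟨∑ s ∈ p.support, MvPolynomial.monomial s (h ^ (∑ i, s i) * p.coeff s), ?_, ?_⟩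
  · refine MvPolynomial.totalDegree_finsetSum_le fun s hs => ?_
    exact (MvPolynomial.totalDegree_monomial_le _ _).trans (MvPolynomial.le_totalDegree hs)
  · ext x
    simp only [polyFun, map_sum, MvPolynomial.eval_monomial]
    rw [MvPolynomial.eval_eq']
    refine Finset.sum_congr rfl fun s _ => ?_
    simp only [Finsupp.prod_pow, PiLp.smul_apply, smul_eq_mul, mul_pow, Finset.prod_mul_distrib,
      Finset.prod_pow_eq_pow_sum]
    ring

lemma integral_dilated (K : Set (EuclideanSpace ℝ (Fin 2))) (p : MvPolynomial (Fin 2) ℝ)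
    {h : ℝ} (hh : 0 < h) (j : ℕ) :
    ∫ x in K, ‖iteratedFDeriv ℝ j (fun x => polyFun p (h • x)) x‖ ^ 2 =
      h ^ (2 * j) * ((h ^ 2)⁻¹ * ∫ x in h • K, ‖iteratedFDeriv ℝ j (polyFun p) x‖ ^ 2) := by
  have key := Measure.setIntegral_comp_smul_of_pos volume
    (fun x => ‖iteratedFDeriv ℝ j (polyFun p) x‖ ^ 2) K hh
  rw [finrank_euclideanSpace_fin, smul_eq_mul] at key
  rw [← key, ← integral_const_mul]
  congr 1
  ext x
  rw [iteratedFDeriv_comp_const_smul h (contDiff_polyFun p)]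
  simp only [norm_smul, norm_pow, Real.norm_eq_abs, abs_of_pos hh]
  ring

/-- The inverse inequality of Lemma 4.3: on a dilated fixed nondegenerate triangle `h•K`,
for polynomials of total degree at most `k`,
`|v|_{H^m(h•K)} ≤ C h^{l−m} |v|_{H^l(h•K)}` with `C` independent of `h`. -/
theorem inverse_inequality_dilated_triangle
    (p₀ p₁ p₂ : EuclideanSpace ℝ (Fin 2))
    (hind : AffineIndependent ℝ ![p₀, p₁, p₂])
    (K : Set (EuclideanSpace ℝ (Fin 2)))
    (hK : K = convexHull ℝ {p₀, p₁, p₂})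
    (k : ℕ) (l m : ℕ) (hlm : l ≤ m) :
    ∃ C > 0, ∀ h : ℝ, 0 < h →
      ∀ v : EuclideanSpace ℝ (Fin 2) → ℝ,
        (∃ p : MvPolynomial (Fin 2) ℝ, p.totalDegree ≤ k ∧
            ∀ x, v x = MvPolynomial.eval (fun i => x i) p) →
        ∫ x in h • K, ‖iteratedFDeriv ℝ m v x‖ ^ 2 ≤
          C ^ 2 * h ^ (2 * ((l : ℤ) - (m : ℤ))) *
            ∫ x in h • K, ‖iteratedFDeriv ℝ l v x‖ ^ 2 := by
  have hcpt : IsCompact K := by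
    rw [hK]
    exact Set.Finite.isCompact_convexHull ℝ (Set.toFinite _)
  have hconv : Convex ℝ K := hK ▸ convex_convexHull ℝ _
  obtain ⟨C, hC, hbound⟩ := exists_reference_bound hcpt hconv k hlm
  refine ⟨C, hC, fun h hh v ⟨p, hp, hv⟩ => ?_⟩
  obtain rfl : v = polyFun p := funext hv
  obtain ⟨q, hq, hqp⟩ := exists_dilated_poly p h
  have hb := hbound q (hq.trans hp)
  rw [hqp, integral_dilated K p hh, integral_dilated K p hh] at hb
  set A := ∫ x in h • K, ‖iteratedFDeriv ℝ m (polyFun p) x‖ ^ 2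
  set B := ∫ x in h • K, ‖iteratedFDeriv ℝ l (polyFun p) x‖ ^ 2
  have hz : h ^ (2 * ((l : ℤ) - (m : ℤ))) = h ^ (2 * l) / h ^ (2 * m) := by
    rw [mul_sub, zpow_sub₀ hh.ne']
    norm_cast
  rw [hz]
  have hpos : 0 < h ^ (2 * m) * (h ^ 2)⁻¹ := by positivity
  refine le_of_mul_le_mul_left ?_ hpos
  calc h ^ (2 * m) * (h ^ 2)⁻¹ * A = h ^ (2 * m) * ((h ^ 2)⁻¹ * A) := by ring
    _ ≤ C ^ 2 * (h ^ (2 * l) * ((h ^ 2)⁻¹ * B)) := hb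
    _ = h ^ (2 * m) * (h ^ 2)⁻¹ * (C ^ 2 * (h ^ (2 * l) / h ^ (2 * m)) * B) := by
      field_simp
end
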